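/- Let F be a finite collection of finite sets, all of the same cardinality α. Then F is an hke collection if and only if F is isomorphic to a subcollection of the typical collection for α. -/

import Mathlib

open Finset

/-- The union of a finite collection of finite sets. -/
def famUnion (Γ : Finset (Finset ℕ)) : Finset ℕ := Γ.sup id

/-- The intersection of a finite collection of finite sets
(equal to the usual intersection when the collection is nonempty). -/
def famInter (Γ : Finset (Finset ℕ)) : Finset ℕ :=
  (Γ.sup id).filter (fun x => ∀ A ∈ Γ, x ∈ A)

/-- `F` is a hereditary König–Egerváry (hke) collection with `α(F) = α`:
`α` is a positive integer and `|⋃Γ| + |⋂Γ| = 2α` for every nonempty subcollection `Γ` of `F`. -/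
def IsHKE (F : Finset (Finset ℕ)) (α : ℕ) : Prop :=
  0 < α ∧ ∀ Γ ⊆ F, Γ.Nonempty → (famUnion Γ).card + (famInter Γ).card = 2 * α

/-- The typical collection for `α`: all subsets `S` of `{1, …, 2α}` such that
for every `i ∈ {1, …, α}`, `i ∈ S ↔ i + α ∉ S`. -/
def typicalCollection (α : ℕ) : Finset (Finset ℕ) :=
  (Finset.Icc 1 (2 * α)).powerset.filter
    (fun S => ∀ i ∈ Finset.Icc 1 α, (i ∈ S ↔ i + α ∉ S))

/-- Two collections are isomorphic: there is a bijection `g : ⋃F₁ → ⋃F₂` such that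
`g[S] ∈ F₂` for every `S ∈ F₁` and `g⁻¹[S] ∈ F₁` for every `S ∈ F₂`. -/
def CollIso (F₁ F₂ : Finset (Finset ℕ)) : Prop :=
  ∃ g : ℕ → ℕ, Set.BijOn g ↑(famUnion F₁) ↑(famUnion F₂) ∧
    (∀ S ∈ F₁, S.image g ∈ F₂) ∧
    (∀ S ∈ F₂, (famUnion F₁).filter (fun x => g x ∈ S) ∈ F₁)

lemma mem_famUnion' {Γ : Finset (Finset ℕ)} {x : ℕ} : x ∈ famUnion Γ ↔ ∃ A ∈ Γ, x ∈ A := by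
  simp [famUnion, Finset.mem_sup]

lemma mem_famInter' {Γ : Finset (Finset ℕ)} (h : Γ.Nonempty) {x : ℕ} :
    x ∈ famInter Γ ↔ ∀ A ∈ Γ, x ∈ A := by
  obtain ⟨B, hB⟩ := h
  unfold famInter
  rw [Finset.mem_filter]
  constructor
  · exact fun h => h.2
  · exact fun h => ⟨(mem_famUnion' (Γ := Γ)).2 ⟨B, hB, h B hB⟩, h⟩

lemma card_split (X : Finset ℕ) (F T : Finset (Finset ℕ)) (p : ℕ → Finset (Finset ℕ))
    (hp : ∀ x, p x ⊆ F) :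
    (X.filter (fun x => T ⊆ p x)).card = (X.filter (fun x => p x = T)).card +
      ∑ T' ∈ F.powerset.filter (fun T' => T ⊂ T'), (X.filter (fun x => p x = T')).card := by
  have h1 : X.filter (fun x => T ⊆ p x) =
      X.filter (fun x => p x = T) ∪ X.filter (fun x => T ⊂ p x) := by
    ext x
    simp only [mem_filter, mem_union]
    constructor
    · rintro ⟨hx, h⟩
      rcases h.eq_or_ssubset with h | h
      · exact Or.inl ⟨hx, h.symm⟩
      · exact Or.inr ⟨hx, h⟩
    · rintro (⟨hx, h⟩ | ⟨hx, h⟩)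
      · exact ⟨hx, h.symm.subset⟩
      · exact ⟨hx, h.subset⟩
  have hd : Disjoint (X.filter (fun x => p x = T)) (X.filter (fun x => T ⊂ p x)) := by
    rw [Finset.disjoint_left]
    intro x hx hx'
    simp only [mem_filter] at hx hx'
    exact hx'.2.ne hx.2.symm
  rw [h1, card_union_of_disjoint hd]
  congr 1
  rw [Finset.card_eq_sum_card_fiberwise (f := p)
    (t := F.powerset.filter (fun T' => T ⊂ T'))]
  · apply Finset.sum_congr rfl
    intro T' hT'
    congr 1
    ext x
    simp only [mem_filter, mem_powerset] at hT' ⊢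
    constructor
    · rintro ⟨⟨a, b⟩, c⟩
      exact ⟨a, c⟩
    · rintro ⟨a, c⟩
      exact ⟨⟨a, c ▸ hT'.2⟩, c⟩
  · intro x hx
    simp only [coe_filter, Set.mem_setOf_eq, mem_powerset] at hx ⊢
    exact ⟨hp x, hx.2⟩

lemma moebius (X : Finset ℕ) (F : Finset (Finset ℕ)) (p q : ℕ → Finset (Finset ℕ))
    (hp : ∀ x, p x ⊆ F) (hq : ∀ x, q x ⊆ F)
    (h : ∀ T ⊆ F, (X.filter (fun x => T ⊆ p x)).card = (X.filter (fun x => T ⊆ q x)).card) :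
    ∀ n, ∀ T ⊆ F, F.card - T.card = n →
      (X.filter (fun x => p x = T)).card = (X.filter (fun x => q x = T)).card := by
  intro n
  induction n using Nat.strong_induction_on with
  | _ n ih =>
    intro T hT hn
    have h0 := h T hT
    rw [card_split X F T p hp, card_split X F T q hq] at h0
    have : ∑ T' ∈ F.powerset.filter (fun T' => T ⊂ T'), (X.filter (fun x => p x = T')).card =
        ∑ T' ∈ F.powerset.filter (fun T' => T ⊂ T'), (X.filter (fun x => q x = T')).card := by
      apply Finset.sum_congr rfl
      intro T' hT'
      simp only [mem_filter, mem_powerset] at hT'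
      have h1 := card_lt_card hT'.2
      have h2 := card_le_card hT'.1
      exact ih (F.card - T'.card) (by omega) T' hT'.1 rfl
    omega

lemma exists_equiv_fib {κ : Type*} [DecidableEq κ] (A B : Finset ℕ) (p q : ℕ → κ)
    (h : ∀ k, (A.filter (fun x => p x = k)).card = (B.filter (fun x => q x = k)).card) :
    ∃ e : A ≃ B, ∀ a : A, q (e a) = p a := by
  have h' : ∀ k, Nonempty ({a : A // p a = k} ≃ {b : B // q b = k}) := by
    intro k
    have e1 : {a : A // p a = k} ≃ (A.filter (fun x => p x = k)) :=
      { toFun := fun a => ⟨a.1.1, mem_filter.2 ⟨a.1.2, a.2⟩⟩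
        invFun := fun x => ⟨⟨x.1, (mem_filter.1 x.2).1⟩, (mem_filter.1 x.2).2⟩
        left_inv := fun _ => rfl
        right_inv := fun _ => rfl }
    have e2 : {a : B // q a = k} ≃ (B.filter (fun x => q x = k)) :=
      { toFun := fun a => ⟨a.1.1, mem_filter.2 ⟨a.1.2, a.2⟩⟩
        invFun := fun x => ⟨⟨x.1, (mem_filter.1 x.2).1⟩, (mem_filter.1 x.2).2⟩
        left_inv := fun _ => rfl
        right_inv := fun _ => rfl }
    exact ⟨e1.trans ((Finset.equivOfCardEq (h k)).trans e2.symm)⟩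
  let f := fun k => (h' k).some
  refine ⟨(Equiv.sigmaFiberEquiv (fun a : A => p a)).symm.trans
    ((Equiv.sigmaCongrRight f).trans (Equiv.sigmaFiberEquiv (fun b : B => q b))), ?_⟩
  intro a
  exact (f (p a) ⟨a, rfl⟩).2

lemma exists_labels (F : Finset (Finset ℕ)) (α : ℕ) (X A : Finset ℕ) (hA : A ⊆ X)
    (hAF : A ∈ F) (hAc : A.card = α) (hX : X.card = 2 * α)
    (h : ∀ T ⊆ F, (X.filter (fun x => ∀ S ∈ T, x ∈ S)).card =
      (X.filter (fun x => ∀ S ∈ T, x ∉ S)).card) :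
    ∃ g : ℕ → ℕ, Set.InjOn g X ∧ (∀ x ∈ X, g x ∈ Icc 1 (2 * α)) ∧
      ∀ i ∈ Icc 1 α, ∃ a ∈ X, ∃ b ∈ X, g a = i ∧ g b = i + α ∧ ∀ S ∈ F, (a ∈ S ↔ b ∉ S) := by
  set p : ℕ → Finset (Finset ℕ) := fun x => F.filter (fun S => x ∈ S) with hp
  set q : ℕ → Finset (Finset ℕ) := fun x => F.filter (fun S => x ∉ S) with hq
  have hpq : ∀ T ⊆ F, (X.filter (fun x => p x = T)).card = (X.filter (fun x => q x = T)).card := by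
    intro T hT
    refine moebius X F p q (fun x => filter_subset _ _) (fun x => filter_subset _ _) ?_ _ T hT rfl
    intro T hT
    have h0 := h T hT
    convert h0 using 4 with x x
    · simp only [hp, subset_iff, mem_filter]
      exact ⟨fun k S hS => (k hS).2, fun k S hS => ⟨hT hS, k S hS⟩⟩
    · simp only [hq, subset_iff, mem_filter]
      exact ⟨fun k S hS => (k hS).2, fun k S hS => ⟨hT hS, k S hS⟩⟩
  obtain ⟨e, he⟩ := exists_equiv_fib A (X \ A) p q (by
    intro T
    by_cases hT : T ⊆ F ∧ A ∈ T
    · have h1 : A.filter (fun x => p x = T) = X.filter (fun x => p x = T) := by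
        ext x
        simp only [mem_filter]
        refine ⟨fun k => ⟨hA k.1, k.2⟩, fun k => ⟨?_, k.2⟩⟩
        have := hT.2
        rw [← k.2] at this
        exact (mem_filter.1 this).2
      have h2 : (X \ A).filter (fun x => q x = T) = X.filter (fun x => q x = T) := by
        ext x
        simp only [mem_filter, mem_sdiff]
        refine ⟨fun k => ⟨k.1.1, k.2⟩, fun k => ⟨⟨k.1, ?_⟩, k.2⟩⟩
        have := hT.2
        rw [← k.2] at this
        exact (mem_filter.1 this).2
      rw [h1, h2, hpq T hT.1]
    · rw [filter_false_of_mem, filter_false_of_mem]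
      · rintro x hx rfl
        exact hT ⟨filter_subset _ _, mem_filter.2 ⟨hAF, (mem_sdiff.1 hx).2⟩⟩
      · rintro x hx rfl
        exact hT ⟨filter_subset _ _, mem_filter.2 ⟨hAF, hx⟩⟩)
  let ε : A ≃ Fin α := A.equivFinOfCardEq hAc
  let g : ℕ → ℕ := fun x => if hx : x ∈ A then (ε ⟨x, hx⟩ : ℕ) + 1 else
    if hx : x ∈ X \ A then (ε (e.symm ⟨x, hx⟩) : ℕ) + 1 + α else 0
  have g1 : ∀ a : A, g a = (ε a : ℕ) + 1 := fun a => by simp [g]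
  have g2 : ∀ b : (X \ A : Finset ℕ), g b = (ε (e.symm b) : ℕ) + 1 + α := fun b => by
    have hb := mem_sdiff.1 b.2
    simp [g, hb.1, hb.2]
  have cases : ∀ x ∈ X, (∃ a : A, x = a) ∨ ∃ b : (X \ A : Finset ℕ), x = b := by
    intro x hx
    by_cases hxA : x ∈ A
    · exact Or.inl ⟨⟨x, hxA⟩, rfl⟩
    · exact Or.inr ⟨⟨x, mem_sdiff.2 ⟨hx, hxA⟩⟩, rfl⟩
  refine ⟨g, ?_, ?_, ?_⟩
  · intro x hx y hy hxy
    rcases cases x hx with ⟨a, rfl⟩ | ⟨a, rfl⟩ <;> rcases cases y hy with ⟨b, rfl⟩ | ⟨b, rfl⟩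
    · rw [g1, g1] at hxy
      rw [ε.injective (Fin.ext (by omega : (ε a : ℕ) = ε b))]
    · rw [g1, g2] at hxy
      have := (ε a).2
      omega
    · rw [g1, g2] at hxy
      have := (ε b).2
      omega
    · rw [g2, g2] at hxy
      rw [e.symm.injective (ε.injective (Fin.ext (by omega :
        (ε (e.symm a) : ℕ) = ε (e.symm b))))]
  · intro x hx
    rw [mem_Icc]
    rcases cases x hx with ⟨a, rfl⟩ | ⟨a, rfl⟩
    · rw [g1]
      have := (ε a).2
      omega
    · rw [g2]
      have := (ε (e.symm a)).2
      omega
  · intro i hi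
    rw [mem_Icc] at hi
    let a : A := ε.symm ⟨i - 1, by omega⟩
    have ha : (ε a : ℕ) = i - 1 := by simp [a]
    refine ⟨a, hA a.2, e a, (mem_sdiff.1 (e a).2).1, ?_, ?_, ?_⟩
    · rw [g1]; omega
    · rw [g2, Equiv.symm_apply_apply]; omega
    · intro S hS
      have h0 : S ∈ q (e a) ↔ S ∈ p a := by rw [he]
      simp only [hp, hq, mem_filter, hS, true_and] at h0
      exact h0.symm

lemma typical_hke (α : ℕ) (Γ : Finset (Finset ℕ)) (hΓ : Γ ⊆ typicalCollection α)
    (hne : Γ.Nonempty) : (famUnion Γ).card + (famInter Γ).card = 2 * α := by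
  have hT : ∀ S ∈ Γ, S ⊆ Icc 1 (2 * α) ∧ ∀ i ∈ Icc 1 α, (i ∈ S ↔ i + α ∉ S) := by
    intro S hS
    have := hΓ hS
    simpa only [typicalCollection, mem_filter, mem_powerset] using this
  let σ : ℕ → ℕ := fun x => if x ≤ α then x + α else x - α
  have hσ : ∀ x ∈ Icc 1 (2 * α), σ x ∈ Icc 1 (2 * α) ∧ σ (σ x) = x := by
    intro x hx
    simp only [mem_Icc, σ] at hx ⊢
    split_ifs <;> omega
  have hS : ∀ S ∈ Γ, ∀ x ∈ Icc 1 (2 * α), (σ x ∈ S ↔ x ∉ S) := by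
    intro S hS x hx
    rw [mem_Icc] at hx
    simp only [σ]
    split_ifs with h
    · have := (hT S hS).2 x (mem_Icc.2 ⟨hx.1, h⟩)
      tauto
    · have := (hT S hS).2 (x - α) (mem_Icc.2 ⟨by omega, by omega⟩)
      rwa [show x - α + α = x by omega] at this
  have hU : famUnion Γ ⊆ Icc 1 (2 * α) := by
    intro x hx
    obtain ⟨A, hA, hx⟩ := mem_famUnion'.1 hx
    exact (hT A hA).1 hx
  have hI : famInter Γ ⊆ Icc 1 (2 * α) := fun x hx => hU (mem_filter.1 hx).1
  have himg : (famInter Γ).image σ = Icc 1 (2 * α) \ famUnion Γ := by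
    ext y
    simp only [mem_image, mem_sdiff, mem_famUnion', mem_famInter' hne]
    constructor
    · rintro ⟨x, hx, rfl⟩
      have hx' := hI ((mem_famInter' hne).2 hx)
      refine ⟨(hσ x hx').1, ?_⟩
      rintro ⟨A, hA, h⟩
      exact (hS A hA x hx').1 h (hx A hA)
    · rintro ⟨hy, h⟩
      refine ⟨σ y, ?_, (hσ y hy).2⟩
      intro A hA
      exact (hS A hA y hy).2 (fun h' => h ⟨A, hA, h'⟩)
  have hc : ((famInter Γ).image σ).card = (famInter Γ).card := by
    apply card_image_of_injOn
    intro x hx y hy hxy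
    rw [← (hσ x (hI hx)).2, ← (hσ y (hI hy)).2]
    exact congrArg σ hxy
  rw [himg, card_sdiff_of_subset hU, Nat.card_Icc] at hc
  have := card_le_card hU
  rw [Nat.card_Icc] at this
  omega

theorem isHKE_iff_iso_subcollection_typical (F : Finset (Finset ℕ)) (α : ℕ) (hα : 0 < α)
    (hcard : ∀ A ∈ F, A.card = α) :
    (∃ β, IsHKE F β) ↔ ∃ F' ⊆ typicalCollection α, CollIso F F' := by
  constructor
  · rintro ⟨β, hβ, hF⟩
    rcases F.eq_empty_or_nonempty with rfl | hne
    · exact ⟨∅, empty_subset _, id, by simp [famUnion], by simp, by simp⟩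
    obtain ⟨A, hA⟩ := hne
    have hAU : A ⊆ famUnion F := fun x hx => mem_famUnion'.2 ⟨A, hA, hx⟩
    have hβα : β = α := by
      have h1 := hF {A} (by simpa using hA) (by simp)
      have h2 : famUnion {A} = A := by simp [famUnion]
      have h3 : famInter {A} = A := by
        ext x
        rw [mem_famInter' (by simp)]
        simp
      rw [h2, h3, hcard A hA] at h1
      omega
    subst hβα
    have hUc : (famUnion F).card ≤ 2 * β := by
      have := hF F subset_rfl ⟨A, hA⟩
      omega
    obtain ⟨X, hUX, hX⟩ := Infinite.exists_superset_card_eq (famUnion F) (2 * β) hUc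
    obtain ⟨g, ginj, gI, gp⟩ := exists_labels F β X A (hAU.trans hUX) hA (hcard A hA) hX (by
      intro T hT
      rcases T.eq_empty_or_nonempty with rfl | hTne
      · simp
      have h1 := hF T hT hTne
      have hTX : famUnion T ⊆ X := by
        intro x hx
        obtain ⟨S, hS, hx⟩ := mem_famUnion'.1 hx
        exact hUX (mem_famUnion'.2 ⟨S, hT hS, hx⟩)
      have h2 : X.filter (fun x => ∀ S ∈ T, x ∈ S) = famInter T := by
        ext x
        rw [mem_famInter' hTne, mem_filter]
        refine ⟨fun k => k.2, fun k => ⟨?_, k⟩⟩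
        obtain ⟨S, hS⟩ := hTne
        exact hTX (mem_famUnion'.2 ⟨S, hS, k S hS⟩)
      have h3 : X.filter (fun x => ∀ S ∈ T, x ∉ S) = X \ famUnion T := by
        ext x
        simp [mem_famUnion']
      rw [h2, h3, card_sdiff_of_subset hTX]
      omega)
    have hSX : ∀ S ∈ F, S ⊆ X := fun S hS x hx => hUX (mem_famUnion'.2 ⟨S, hS, hx⟩)
    have hmem : ∀ S ∈ F, ∀ x ∈ X, (g x ∈ S.image g ↔ x ∈ S) := by
      intro S hS x hx
      rw [mem_image]
      constructor
      · rintro ⟨y, hy, hxy⟩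
        rwa [← ginj (hSX S hS hy) hx hxy]
      · exact fun h => ⟨x, h, rfl⟩
    refine ⟨F.image (fun S => S.image g), ?_, g, ⟨?_, ?_, ?_⟩, ?_, ?_⟩
    · intro S' hS'
      obtain ⟨S, hS, rfl⟩ := mem_image.1 hS'
      simp only [typicalCollection, mem_filter, mem_powerset]
      constructor
      · intro y hy
        obtain ⟨x, hx, rfl⟩ := mem_image.1 hy
        exact gI x (hSX S hS hx)
      · intro i hi
        obtain ⟨a, ha, b, hb, h1, h2, h3⟩ := gp i hi
        rw [← h2, ← h1, hmem S hS a ha, hmem S hS b hb]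
        exact h3 S hS
    · intro x hx
      obtain ⟨S, hS, hx⟩ := mem_famUnion'.1 (mem_coe.1 hx)
      exact mem_coe.2 (mem_famUnion'.2 ⟨_, mem_image_of_mem _ hS, mem_image_of_mem _ hx⟩)
    · exact ginj.mono (by exact_mod_cast hUX)
    · intro y hy
      obtain ⟨S', hS', hy⟩ := mem_famUnion'.1 (mem_coe.1 hy)
      obtain ⟨S, hS, rfl⟩ := mem_image.1 hS'
      obtain ⟨x, hx, rfl⟩ := mem_image.1 hy
      exact ⟨x, mem_coe.2 (mem_famUnion'.2 ⟨S, hS, hx⟩), rfl⟩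
    · exact fun S hS => mem_image_of_mem _ hS
    · intro S' hS'
      obtain ⟨S, hS, rfl⟩ := mem_image.1 hS'
      convert hS using 1
      ext x
      rw [mem_filter]
      constructor
      · rintro ⟨h1, h2⟩
        exact (hmem S hS x (hUX h1)).1 h2
      · intro hx
        exact ⟨mem_famUnion'.2 ⟨S, hS, hx⟩, mem_image_of_mem _ hx⟩
  · rintro ⟨F', hF', g, hg, h1, h2⟩
    refine ⟨α, hα, ?_⟩
    intro Γ hΓ hne
    have hΓ' : Γ.image (fun S => S.image g) ⊆ typicalCollection α := by
      intro S' hS'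
      obtain ⟨S, hS, rfl⟩ := mem_image.1 hS'
      exact hF' (h1 S (hΓ hS))
    have key := typical_hke α _ hΓ' (hne.image _)
    have hSU : ∀ S ∈ Γ, S ⊆ famUnion F := fun S hS x hx => mem_famUnion'.2 ⟨S, hΓ hS, hx⟩
    have hΓU : famUnion Γ ⊆ famUnion F := by
      intro x hx
      obtain ⟨S, hS, hx⟩ := mem_famUnion'.1 hx
      exact hSU S hS hx
    have e1 : famUnion (Γ.image (fun S => S.image g)) = (famUnion Γ).image g := by
      ext y
      simp only [mem_famUnion', mem_image]
      constructor
      · rintro ⟨_, ⟨S, hS, rfl⟩, hy⟩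
        obtain ⟨x, hx, rfl⟩ := mem_image.1 hy
        exact ⟨x, ⟨S, hS, hx⟩, rfl⟩
      · rintro ⟨x, ⟨S, hS, hx⟩, rfl⟩
        exact ⟨_, ⟨S, hS, rfl⟩, mem_image_of_mem _ hx⟩
    have e2 : famInter (Γ.image (fun S => S.image g)) = (famInter Γ).image g := by
      ext y
      rw [mem_famInter' (hne.image _), mem_image]
      constructor
      · intro h
        obtain ⟨S₀, hS₀⟩ := hne
        obtain ⟨x, hx, rfl⟩ := mem_image.1 (h _ (mem_image_of_mem _ hS₀))
        refine ⟨x, (mem_famInter' ⟨S₀, hS₀⟩).2 ?_, rfl⟩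
        intro S hS
        obtain ⟨z, hz, hzx⟩ := mem_image.1 (h _ (mem_image_of_mem _ hS))
        rwa [← hg.injOn (mem_coe.2 (hSU S hS hz)) (mem_coe.2 (hSU S₀ hS₀ hx)) hzx]
      · rintro ⟨x, hx, rfl⟩ S' hS'
        obtain ⟨S, hS, rfl⟩ := mem_image.1 hS'
        exact mem_image_of_mem _ ((mem_famInter' hne).1 hx S hS)
    rw [e1, e2, card_image_of_injOn (hg.injOn.mono (by exact_mod_cast hΓU)),
      card_image_of_injOn (hg.injOn.mono (by
        intro x hx
        exact hΓU (mem_filter.1 (mem_coe.1 hx)).1))] at key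
    exact key
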